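/- Let G be a subgroup of Thompson's group V that is swap-primitive. Then G = V. -/

import Mathlib

/-- Addresses: finite words over the alphabet `{0,1}` (`Bool`). -/
abbrev Addr : Type := List Bool

/-- Cantor space: infinite words over the alphabet `{0,1}`. -/
abbrev Cantor : Type := ℕ → Bool

/-- Prepend the finite word `α` to the infinite word `w`. -/
def wcat (α : Addr) (w : Cantor) : Cantor := fun n =>
  if h : n < α.length then α.get ⟨n, h⟩ else w (n - α.length)

/-- The cone of the address `α`: the set of infinite words having `α` as a prefix. -/
def cone (α : Addr) : Set Cantor := Set.range (wcat α)

/-- `g` is a prefix substitution map: there are partitions of Cantor space into cones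
`(A i)𝔠` and `(B i)𝔠` such that `g` maps `(A i) w` to `(B i) w`. -/
def IsPrefixSubst (g : Equiv.Perm Cantor) : Prop :=
  ∃ (n : ℕ) (A B : Fin n → Addr),
    (∀ i j, i ≠ j → Disjoint (cone (A i)) (cone (A j))) ∧
    (⋃ i, cone (A i)) = Set.univ ∧
    (∀ i j, i ≠ j → Disjoint (cone (B i)) (cone (B j))) ∧
    (⋃ i, cone (B i)) = Set.univ ∧
    (∀ i w, g (wcat (A i) w) = wcat (B i) w)

/-- Thompson's group `V`, as the set of prefix substitution maps inside `Equiv.Perm Cantor`. -/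
def VSet : Set (Equiv.Perm Cantor) := { g | IsPrefixSubst g }

/-- `α ^ g = β` : `g` maps the cone of `α` onto the cone of `β` by the prefix
substitution `α ↦ β`. -/
def actsOn (g : Equiv.Perm Cantor) (α β : Addr) : Prop :=
  ∀ w, g (wcat α w) = wcat β w

/-- A subset of `Equiv.Perm Cantor` that is closed under the group operations. -/
def IsSubgroupSet (M : Set (Equiv.Perm Cantor)) : Prop :=
  (1 : Equiv.Perm Cantor) ∈ M ∧ (∀ g ∈ M, ∀ h ∈ M, g * h ∈ M) ∧ ∀ g ∈ M, g⁻¹ ∈ M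

/-- `M` is a maximal subgroup of Thompson's group `V`. -/
def IsMaximalSubgroupOfV (M : Set (Equiv.Perm Cantor)) : Prop :=
  IsSubgroupSet M ∧ M ⊆ VSet ∧ M ≠ VSet ∧
    ∀ H : Set (Equiv.Perm Cantor),
      IsSubgroupSet H → M ⊆ H → H ⊆ VSet → H = M ∨ H = VSet

/-- The addresses `α` and `β` are incomparable: their cones are disjoint. -/
def Incomp (α β : Addr) : Prop := Disjoint (cone α) (cone β)

/-- The pair of addresses `α, β` has small support: their cones do not cover Cantor
space. -/
def SmallPair (α β : Addr) : Prop := cone α ∪ cone β ≠ Set.univ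

/-- `g` is the transposition `(α β)`: it swaps the cones of `α` and `β` by prefix
substitutions and fixes everything else. -/
def IsTranspositionOf (g : Equiv.Perm Cantor) (α β : Addr) : Prop :=
  (∀ w, g (wcat α w) = wcat β w) ∧ (∀ w, g (wcat β w) = wcat α w) ∧
    ∀ x, x ∉ cone α → x ∉ cone β → g x = x

/-- A `G`-chain connecting `a` to `b`: consecutive links are swapped by small
transpositions belonging to `G`. -/
def GChain (G : Set (Equiv.Perm Cantor)) (a b : Addr) : Prop :=
  ∃ (n : ℕ) (c : ℕ → Addr), c 0 = a ∧ c n = b ∧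
    ∀ i, i < n → Incomp (c i) (c (i + 1)) ∧ SmallPair (c i) (c (i + 1)) ∧
      ∃ g ∈ G, IsTranspositionOf g (c i) (c (i + 1))

/-- `G` is swap-primitive: every pair of nonempty addresses is connected by a
`G`-chain. -/
def SwapPrimitive (G : Set (Equiv.Perm Cantor)) : Prop :=
  ∀ a b : Addr, a ≠ [] → b ≠ [] → GChain G a b

/-!
Conjugating `(a b)` by an element of `G` which acts on the two cones by `a ↦ a'` and `b ↦ b'`
gives `(a' b')`. Everything follows from such conjugations and from following chains up to the
first link that leaves a well-chosen set of addresses.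

Say that `G` swaps `a, b` hereditarily when it contains `(au bu)` for all words `u`. Such a pair
exists: a chain which starts disjointly from a small transposition `(0 b)` and ends at `0` yields
three addresses, any two of them swapped by `G`; and if `(av bv)` were not in `G`, a chain leaving
the cone of `a` would provide conjugations producing it.

Call the points `aw` and `bw` locally swapped when `G` swaps `a, b` hereditarily. Up to
reflexivity this is an equivalence relation without singleton classes. If `(c d)` lies in `G` and
`cw` is equivalent to a point outside both cones, conjugation by `(c d)` moves only one end of the
local swap, whence `G` swaps `cz, dz` hereditarily for some prefix `z` of `w`. So if the cone of
`c` misses a class, the cone of `d` misses or contains it; as small cones around a point of the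
class do neither, all classes are dense. Every `cw` is then equivalent to a point outside both
cones of a small transposition `(c d)` in `G`, and König's lemma makes the pair `c, d` hereditary.

For arbitrary incomparable `a, b` the local swaps at a point `w` compose along a chain from `a` to
`b`. Distinctness of the two ends is needed at every step; starting from an auxiliary point
equivalent to `aw` and distinct from all `cw` with `c` on the chain, which exists by density,
ensures it. König's lemma again gives `(a b)`. Finally, an element of `V` composed with suitable
transpositions maps a pair of sibling cones to a pair of sibling cones, and merging both pairs
shortens its pair of partitions.
-/

/-! ### Words and cones -/

namespace Cantor

/-- The prefix of length `n` of an infinite word. -/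
def take (w : Cantor) (n : ℕ) : Addr := List.ofFn fun i : Fin n => w i

/-- The infinite word obtained by deleting the first `n` letters. -/
def drop (w : Cantor) (n : ℕ) : Cantor := fun i => w (n + i)

@[simp] lemma length_take (w : Cantor) (n : ℕ) : (w.take n).length = n := List.length_ofFn

@[simp] lemma getElem_take (w : Cantor) {n i : ℕ} (h : i < (w.take n).length) :
    (w.take n)[i] = w i := by
  simp [take]

lemma take_succ (w : Cantor) (n : ℕ) : w.take (n + 1) = w.take n ++ [w n] :=
  List.ofFn_succ_last

lemma take_add (w : Cantor) (m n : ℕ) : w.take (m + n) = w.take m ++ (w.drop m).take n :=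
  List.ofFn_add

end Cantor

@[simp] lemma wcat_nil (w : Cantor) : wcat [] w = w := by
  funext i
  simp [wcat]

@[simp] lemma wcat_append (a b : Addr) (w : Cantor) : wcat (a ++ b) w = wcat a (wcat b w) := by
  funext i
  simp only [wcat]
  grind

lemma wcat_injective (a : Addr) : Function.Injective (wcat a) := fun v w h => by
  funext i
  simpa [wcat] using congrFun h (a.length + i)

@[simp] lemma wcat_take_drop (w : Cantor) (n : ℕ) : wcat (w.take n) (w.drop n) = w := by
  funext i
  simp only [wcat, Cantor.drop, Cantor.length_take]
  grind [Cantor.getElem_take]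

lemma take_wcat (a : Addr) (w : Cantor) (n : ℕ) :
    (wcat a w).take (a.length + n) = a ++ w.take n := by
  refine List.ext_getElem (by simp) fun i _ _ => ?_
  simp only [Cantor.getElem_take, wcat]
  grind [Cantor.getElem_take]

lemma wcat_mem_cone (a : Addr) (w : Cantor) : wcat a w ∈ cone a := ⟨w, rfl⟩

lemma mem_cone_iff {x : Cantor} {a : Addr} : x ∈ cone a ↔ x.take a.length = a := by
  refine ⟨?_, fun h => ⟨x.drop a.length, ?_⟩⟩
  · rintro ⟨w, rfl⟩
    exact (take_wcat a w 0).trans (List.append_nil a)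
  · conv_lhs => rw [← h, Cantor.length_take, wcat_take_drop]

lemma mem_cone_take (x : Cantor) (n : ℕ) : x ∈ cone (x.take n) := ⟨_, wcat_take_drop x n⟩

lemma cone_subset_of_prefix {a b : Addr} (h : a <+: b) : cone b ⊆ cone a := by
  obtain ⟨u, rfl⟩ := h
  rintro _ ⟨w, rfl⟩
  exact wcat_append a u w ▸ wcat_mem_cone a _

lemma prefix_of_mem_cone {a b : Addr} {x : Cantor} (ha : x ∈ cone a) (hb : x ∈ cone b)
    (h : a.length ≤ b.length) : a <+: b := by
  obtain ⟨k, hk⟩ := Nat.exists_eq_add_of_le h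
  rw [← mem_cone_iff.1 hb, hk, Cantor.take_add, mem_cone_iff.1 ha]
  exact List.prefix_append _ _

lemma exists_mem_cone_child {a : Addr} {x : Cantor} (h : x ∈ cone a) :
    ∃ t, x ∈ cone (a ++ [t]) := by
  obtain ⟨w, rfl⟩ := h
  exact ⟨w 0, w.drop 1, by rw [wcat_append]; exact congrArg (wcat a) (wcat_take_drop w 1)⟩

/-! ### Incomparable addresses -/

lemma incomp_iff {a b : Addr} : Incomp a b ↔ ¬ a <+: b ∧ ¬ b <+: a := by
  refine ⟨fun h => ⟨fun hab => ?_, fun hba => ?_⟩, fun ⟨hab, hba⟩ => ?_⟩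
  · exact Set.disjoint_right.1 h (wcat_mem_cone b default)
      (cone_subset_of_prefix hab (wcat_mem_cone b default))
  · exact Set.disjoint_left.1 h (wcat_mem_cone a default)
      (cone_subset_of_prefix hba (wcat_mem_cone a default))
  · refine Set.disjoint_left.2 fun x hxa hxb => ?_
    rcases le_total a.length b.length with h | h
    · exact hab (prefix_of_mem_cone hxa hxb h)
    · exact hba (prefix_of_mem_cone hxb hxa h)

lemma incomp_of_mem_of_notMem {a b : Addr} {x : Cantor} (ha : x ∈ cone a) (hb : x ∉ cone b)
    (h : b.length ≤ a.length) : Incomp a b := by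
  refine incomp_iff.2 ⟨fun hab => ?_, fun hba => hb (cone_subset_of_prefix hba ha)⟩
  exact hb (hab.eq_of_length_le h ▸ ha)

lemma Incomp.symm {a b : Addr} (h : Incomp a b) : Incomp b a := Disjoint.symm h

lemma Incomp.mono {a b a' b' : Addr} (h : Incomp a b) (ha : a <+: a') (hb : b <+: b') :
    Incomp a' b' :=
  Set.disjoint_of_subset (cone_subset_of_prefix ha) (cone_subset_of_prefix hb) h

lemma Incomp.append {a b : Addr} (h : Incomp a b) (u v : Addr) : Incomp (a ++ u) (b ++ v) :=
  h.mono (List.prefix_append _ _) (List.prefix_append _ _)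

lemma Incomp.wcat_ne {a b : Addr} (h : Incomp a b) (v w : Cantor) : wcat a v ≠ wcat b w :=
  Disjoint.ne_of_mem h (wcat_mem_cone a v) (wcat_mem_cone b w)

lemma Incomp.left_ne_nil {a b : Addr} (h : Incomp a b) : a ≠ [] := by
  rintro rfl
  exact (incomp_iff.1 h).1 List.nil_prefix

lemma Incomp.right_ne_nil {a b : Addr} (h : Incomp a b) : b ≠ [] := h.symm.left_ne_nil

lemma incomp_of_length_eq {a b : Addr} (hl : a.length = b.length) (hne : a ≠ b) : Incomp a b :=
  incomp_iff.2 ⟨fun h => hne (h.eq_of_length hl), fun h => hne (h.eq_of_length hl.symm).symm⟩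

lemma incomp_child_of_ne (a : Addr) {s t : Bool} (h : s ≠ t) : Incomp (a ++ [s]) (a ++ [t]) :=
  incomp_of_length_eq (by simp) (by simpa using h)

lemma Incomp.head?_ne_of_singleton {t : Bool} {a : Addr} (h : Incomp [t] a) :
    a.head? ≠ some t := by
  rintro ha
  obtain ⟨u, rfl⟩ := List.head?_eq_some_iff.1 ha
  exact (incomp_iff.1 h).1 ⟨u, rfl⟩

lemma incomp_of_head?_ne {a b : Addr} (ha : a ≠ []) (hb : b ≠ []) (h : a.head? ≠ b.head?) :
    Incomp a b := by
  obtain ⟨s, a, rfl⟩ := List.exists_cons_of_ne_nil ha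
  obtain ⟨t, b, rfl⟩ := List.exists_cons_of_ne_nil hb
  have hst : s ≠ t := by simpa using h
  simp [incomp_iff, List.cons_prefix_cons, hst, hst.symm]

lemma SmallPair.exists_incomp {a b : Addr} (h : SmallPair a b) :
    ∃ d, Incomp d a ∧ Incomp d b := by
  obtain ⟨x, hx⟩ := (Set.ne_univ_iff_exists_notMem _).1 h
  rw [Set.mem_union, not_or] at hx
  let n := max a.length b.length
  exact ⟨x.take n,
    incomp_of_mem_of_notMem (mem_cone_take x n) hx.1 (by simp [n]),
    incomp_of_mem_of_notMem (mem_cone_take x n) hx.2 (by simp [n])⟩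

lemma exists_incomp_take {x y : Cantor} (h : x ≠ y) : ∃ n, Incomp (x.take n) (y.take n) := by
  obtain ⟨i, hi⟩ := Function.ne_iff.1 h
  refine ⟨i + 1, incomp_of_length_eq (by simp) fun he => hi ?_⟩
  rw [Cantor.take_succ, Cantor.take_succ] at he
  simpa using List.append_inj_right' he rfl

lemma exists_cone_disjoint {F : Set Cantor} (hF : F.Finite) : ∃ e, Disjoint F (cone e) := by
  induction F, hF using Set.Finite.induction_on with
  | empty => exact ⟨[], Set.empty_disjoint _⟩
  | @insert x F _ _ ih =>
    obtain ⟨e, he⟩ := ih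
    obtain ⟨t, ht⟩ : ∃ t, x ∉ cone (e ++ [t]) := by
      by_contra! h
      exact Set.disjoint_left.1 (incomp_child_of_ne e Bool.false_ne_true) (h false) (h true)
    exact ⟨e ++ [t], Set.disjoint_insert_left.2
      ⟨ht, he.mono_right (cone_subset_of_prefix (List.prefix_append e [t]))⟩⟩

lemma eventually_incomp_append_take {a b : Addr} {w : Cantor} (h : wcat a w ≠ wcat b w) :
    ∀ᶠ n in Filter.atTop, Incomp (a ++ w.take n) (b ++ w.take n) := by
  obtain ⟨m, hm⟩ := exists_incomp_take h
  have prefix_of (c : Addr) {n : ℕ} (hn : m ≤ n) : (wcat c w).take m <+: c ++ w.take n := by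
    refine prefix_of_mem_cone (mem_cone_take _ m) ?_ (by simp; omega)
    exact take_wcat c w n ▸ mem_cone_take _ _
  filter_upwards [Filter.eventually_ge_atTop m] with n hn
  exact hm.mono (prefix_of a hn) (prefix_of b hn)

/-- König's lemma for the binary tree. -/
lemma bar_induction {P : Addr → Prop} (h : ∀ z, (∀ t, P (z ++ [t])) → P z)
    (hw : ∀ w : Cantor, ∃ n, P (w.take n)) : P [] := by
  by_contra hnil
  have hchild (z : Addr) (hz : ¬ P z) : ∃ t, ¬ P (z ++ [t]) := by
    by_contra! hall
    exact hz (h z hall)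
  choose! t ht using hchild
  let s : ℕ → Addr := Nat.rec [] fun _ z => z ++ [t z]
  have take_eq (n : ℕ) : Cantor.take (t ∘ s) n = s n := by
    induction n with
    | zero => rfl
    | succ n ih => rw [Cantor.take_succ, ih]; rfl
  have not_P (n : ℕ) : ¬ P (s n) := by
    induction n with
    | zero => exact hnil
    | succ n ih => exact ht _ ih
  obtain ⟨n, hn⟩ := hw (t ∘ s)
  exact not_P n (take_eq n ▸ hn)

/-! ### Prefix substitutions and transpositions -/

section PrefixSubstitution

variable {g h k : Equiv.Perm Cantor} {a b a' b' : Addr}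

lemma actsOn.append (hg : actsOn g a b) (u : Addr) : actsOn g (a ++ u) (b ++ u) := fun w => by
  rw [wcat_append, wcat_append, hg]

lemma actsOn.mul {c : Addr} (hg : actsOn g b c) (hh : actsOn h a b) : actsOn (g * h) a c :=
  fun w => by rw [Equiv.Perm.mul_apply, hh, hg]

lemma actsOn.inv (hg : actsOn g a b) : actsOn g⁻¹ b a := fun w => by
  rw [Equiv.Perm.inv_eq_iff_eq, hg]

lemma actsOn_of_children (hg : ∀ t, actsOn g (a ++ [t]) (b ++ [t])) : actsOn g a b := fun w => by
  have hw : wcat [w 0] (w.drop 1) = w := wcat_take_drop w 1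
  simpa only [wcat_append, hw] using hg (w 0) (w.drop 1)

lemma actsOn.apply_mem_cone_iff (hg : actsOn g a b) {x : Cantor} : g x ∈ cone b ↔ x ∈ cone a := by
  constructor
  · rintro ⟨w, hw⟩
    exact ⟨w, g.injective (by rw [hg, hw])⟩
  · rintro ⟨w, rfl⟩
    exact ⟨w, (hg w).symm⟩

lemma Incomp.map (hab : Incomp a b) (ha : actsOn g a a') (hb : actsOn g b b') : Incomp a' b' := by
  refine Set.disjoint_left.2 ?_
  rintro _ ⟨v, rfl⟩ hv
  rw [← ha v, hb.apply_mem_cone_iff] at hv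
  exact Set.disjoint_left.1 hab (wcat_mem_cone a v) hv

namespace IsTranspositionOf

lemma symm (hg : IsTranspositionOf g a b) : IsTranspositionOf g b a :=
  ⟨hg.2.1, hg.1, fun x hb ha => hg.2.2 x ha hb⟩

lemma actsOn_left (hg : IsTranspositionOf g a b) : actsOn g a b := hg.1

lemma actsOn_self (hg : IsTranspositionOf g a b) {d : Addr} (ha : Incomp d a) (hb : Incomp d b) :
    actsOn g d d := fun w =>
  hg.2.2 _ (Set.disjoint_left.1 ha (wcat_mem_cone d w)) (Set.disjoint_left.1 hb (wcat_mem_cone d w))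

lemma conj (hg : IsTranspositionOf g a b) (ha : actsOn k a a') (hb : actsOn k b b') :
    IsTranspositionOf (k * g * k⁻¹) a' b' := by
  refine ⟨(hb.mul hg.actsOn_left).mul ha.inv, (ha.mul hg.symm.actsOn_left).mul hb.inv,
    fun x hxa hxb => ?_⟩
  rw [← k.apply_symm_apply x, ha.apply_mem_cone_iff] at hxa
  rw [← k.apply_symm_apply x, hb.apply_mem_cone_iff] at hxb
  exact (congrArg k (hg.2.2 _ hxa hxb)).trans (k.apply_symm_apply x)

/-- A long enough address is incomparable to both `a` and `b`, or extends one of them. -/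
lemma exists_actsOn (hg : IsTranspositionOf g a b) {d : Addr} (ha : a.length ≤ d.length)
    (hb : b.length ≤ d.length) : ∃ d', actsOn g d d' := by
  by_cases had : a <+: d
  · obtain ⟨u, rfl⟩ := had
    exact ⟨_, hg.actsOn_left.append u⟩
  by_cases hbd : b <+: d
  · obtain ⟨u, rfl⟩ := hbd
    exact ⟨_, hg.symm.actsOn_left.append u⟩
  have incomp {c : Addr} (hcd : ¬ c <+: d) (hl : c.length ≤ d.length) : Incomp d c :=
    incomp_iff.2 ⟨fun hdc => hcd (hdc.eq_of_length_le hl ▸ List.prefix_rfl), hcd⟩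
  exact ⟨d, hg.actsOn_self (incomp had ha) (incomp hbd hb)⟩

lemma mul_actsOn_of_children (hab : Incomp a b)
    (hg : IsTranspositionOf g (a ++ [false]) (b ++ [false]))
    (hh : IsTranspositionOf h (a ++ [true]) (b ++ [true])) : actsOn (g * h) a b := by
  refine actsOn_of_children fun t => ?_
  cases t
  · exact hg.actsOn_left.mul
      (hh.actsOn_self (incomp_child_of_ne a Bool.false_ne_true) (hab.append _ _))
  · exact (hg.actsOn_self (hab.symm.append _ _)
      (incomp_child_of_ne b Bool.false_ne_true.symm)).mul hh.actsOn_left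

lemma mul_of_children (hab : Incomp a b)
    (hg : IsTranspositionOf g (a ++ [false]) (b ++ [false]))
    (hh : IsTranspositionOf h (a ++ [true]) (b ++ [true])) : IsTranspositionOf (g * h) a b := by
  refine ⟨mul_actsOn_of_children hab hg hh, mul_actsOn_of_children hab.symm hg.symm hh.symm,
    fun x hxa hxb => ?_⟩
  have notMem_child {c : Addr} (hx : x ∉ cone c) (t : Bool) : x ∉ cone (c ++ [t]) :=
    fun hm => hx (cone_subset_of_prefix (List.prefix_append _ _) hm)
  rw [Equiv.Perm.mul_apply, hh.2.2 _ (notMem_child hxa _) (notMem_child hxb _),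
    hg.2.2 _ (notMem_child hxa _) (notMem_child hxb _)]

end IsTranspositionOf

end PrefixSubstitution

/-- The addresses `a` and `b` are incomparable, and `G` contains the transposition `(a b)`. -/
def HasSwap (G : Subgroup (Equiv.Perm Cantor)) (a b : Addr) : Prop :=
  Incomp a b ∧ ∃ g ∈ G, IsTranspositionOf g a b

section Swaps

variable {G : Subgroup (Equiv.Perm Cantor)} {a b c d : Addr}

namespace HasSwap

lemma symm (h : HasSwap G a b) : HasSwap G b a := by
  obtain ⟨hab, g, hg, hgab⟩ := h
  exact ⟨hab.symm, g, hg, hgab.symm⟩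

lemma conj (h : HasSwap G a b) {k : Equiv.Perm Cantor} (hk : k ∈ G) {a' b' : Addr}
    (ha : actsOn k a a') (hb : actsOn k b b') : HasSwap G a' b' := by
  obtain ⟨hab, g, hg, hgab⟩ := h
  exact ⟨hab.map ha hb, k * g * k⁻¹, G.mul_mem (G.mul_mem hk hg) (G.inv_mem hk), hgab.conj ha hb⟩

lemma move {u : Addr} (h : HasSwap G d (a ++ u)) (hab : HasSwap G a b) (hda : Incomp d a)
    (hdb : Incomp d b) : HasSwap G d (b ++ u) := by
  obtain ⟨-, k, hk, hkab⟩ := hab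
  exact h.conj hk (hkab.actsOn_self hda hdb) (hkab.actsOn_left.append u)

lemma move_both {u v : Addr} (h : HasSwap G (a ++ u) (a ++ v)) (hab : HasSwap G a b) :
    HasSwap G (b ++ u) (b ++ v) := by
  obtain ⟨-, k, hk, hkab⟩ := hab
  exact h.conj hk (hkab.actsOn_left.append u) (hkab.actsOn_left.append v)

lemma trans (hab : HasSwap G a b) (hbc : HasSwap G b c) (hac : Incomp a c) : HasSwap G a c := by
  obtain ⟨hab', -⟩ := id hab
  obtain ⟨-, k, hk, hkbc⟩ := hbc
  exact hab.conj hk (hkbc.actsOn_self hab' hac) hkbc.actsOn_left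

lemma append_of_exit {v : Addr} (hab : HasSwap G a b) (h : HasSwap G (a ++ v) d)
    (hda : Incomp d a) (hdb : Incomp d b) : HasSwap G (a ++ v) (b ++ v) :=
  h.trans (h.symm.move hab hda hdb) (hab.1.append v v)

lemma of_children (hab : Incomp a b) (h : ∀ t, HasSwap G (a ++ [t]) (b ++ [t])) :
    HasSwap G a b := by
  obtain ⟨-, g, hg, hgab⟩ := h false
  obtain ⟨-, k, hk, hkab⟩ := h true
  exact ⟨hab, g * k, G.mul_mem hg hk, hgab.mul_of_children hab hkab⟩

end HasSwap

/-- The group `G` contains the transpositions `(au bu)` for all words `u`. -/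
def HasAllSwaps (G : Subgroup (Equiv.Perm Cantor)) (a b : Addr) : Prop :=
  ∀ u, HasSwap G (a ++ u) (b ++ u)

namespace HasAllSwaps

lemma hasSwap (h : HasAllSwaps G a b) : HasSwap G a b := by simpa using h []

lemma incomp (h : HasAllSwaps G a b) : Incomp a b := h.hasSwap.1

lemma append (h : HasAllSwaps G a b) (u : Addr) : HasAllSwaps G (a ++ u) (b ++ u) := fun v => by
  simpa using h (u ++ v)

lemma symm (h : HasAllSwaps G a b) : HasAllSwaps G b a := fun u => (h u).symm

lemma conj (h : HasAllSwaps G a b) {k : Equiv.Perm Cantor} (hk : k ∈ G) {a' b' : Addr}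
    (ha : actsOn k a a') (hb : actsOn k b b') : HasAllSwaps G a' b' :=
  fun u => (h u).conj hk (ha.append u) (hb.append u)

lemma trans (hab : HasAllSwaps G a b) (hbc : HasAllSwaps G b c) (hac : Incomp a c) :
    HasAllSwaps G a c := fun u => (hab u).trans (hbc u) (hac.append u u)

end HasAllSwaps

/-! ### Chains of small transpositions -/

/-- The links of a `G`-chain. -/
def HasSmallSwap (G : Subgroup (Equiv.Perm Cantor)) (a b : Addr) : Prop :=
  HasSwap G a b ∧ SmallPair a b

lemma GChain.reflTransGen (h : GChain G a b) : Relation.ReflTransGen (HasSmallSwap G) a b := by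
  obtain ⟨n, c, rfl, rfl, hc⟩ := h
  refine Relation.ReflTransGen.lift c (fun _ _ h => h) _ _
    (reflTransGen_of_succ_of_le (fun i j => HasSmallSwap G (c i) (c j)) (fun i hi => ?_) n.zero_le)
  obtain ⟨hinc, hsmall, hswap⟩ := hc i hi.2
  exact ⟨⟨hinc, hswap⟩, hsmall⟩

namespace SwapPrimitive

lemma exists_crossing (hsp : SwapPrimitive G) (ha : a ≠ []) (hb : b ≠ []) {P : Addr → Prop}
    (hPa : P a) (hPb : ¬ P b) : ∃ c d, HasSmallSwap G c d ∧ P c ∧ ¬ P d := by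
  by_contra! hstep
  refine hPb ((hsp a b ha hb).reflTransGen.rec hPa fun {c d} _ hcd hPc => hstep c d hcd hPc)

lemma exists_hasSmallSwap (hsp : SwapPrimitive G) (ha : a ≠ []) : ∃ b, HasSmallSwap G a b := by
  obtain ⟨_, b, hab, rfl, -⟩ :=
    hsp.exists_crossing ha (b := a ++ [false]) (by simp) (P := (· = a)) rfl (by simp)
  exact ⟨b, hab⟩

lemma exists_swap_triple (hsp : SwapPrimitive G) :
    ∃ a b c, HasSwap G a b ∧ HasSwap G a c ∧ HasSwap G b c ∧ b.head? ≠ c.head? := by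
  let a : Addr := [false]
  obtain ⟨b, hab, hsmall⟩ := hsp.exists_hasSmallSwap (a := a) (by simp [a])
  obtain ⟨x, hxa, hxb⟩ := hsmall.exists_incomp
  obtain ⟨d, p, ⟨hdp, -⟩, ⟨hda, hdb⟩, hp⟩ := hsp.exists_crossing
    (P := fun e => Incomp e a ∧ Incomp e b) hxa.left_ne_nil hxa.right_ne_nil ⟨hxa, hxb⟩
    fun h => (incomp_iff.1 h.1).1 List.prefix_rfl
  have head?_ne (u : Addr) {e : Addr} (he : Incomp a e) : (a ++ u).head? ≠ e.head? :=
    he.head?_ne_of_singleton.symm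
  have triple_of_extends {v : Addr} (hdv : HasSwap G d (a ++ v)) :
      ∃ a b c, HasSwap G a b ∧ HasSwap G a c ∧ HasSwap G b c ∧ b.head? ≠ c.head? :=
    ⟨d, a ++ v, b ++ v, hdv, hdv.move hab hda hdb, hab.append_of_exit hdv.symm hda hdb,
      head?_ne v (hab.1.mono List.prefix_rfl (List.prefix_append b v))⟩
  by_cases hap : a <+: p
  · obtain ⟨v, rfl⟩ := hap
    exact triple_of_extends hdp
  by_cases hbp : b <+: p
  · obtain ⟨v, rfl⟩ := hbp
    exact triple_of_extends (hdp.move hab.symm hdb hda)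
  have hpa : Incomp p a := by
    refine incomp_iff.2 ⟨fun hpa => ?_, hap⟩
    rcases (List.prefix_concat_iff (l₂ := [])).1 hpa with rfl | hp
    · exact hap List.prefix_rfl
    · exact hdp.1.right_ne_nil (List.prefix_nil.1 hp)
  obtain ⟨t, rfl⟩ : p <+: b := by
    by_contra hpb
    exact hp ⟨hpa, incomp_iff.2 ⟨hpb, hbp⟩⟩
  have hadt : HasSwap G a (d ++ t) := hab.move hdp.symm hpa.symm hda.symm
  exact ⟨p ++ t, a, d ++ t, hab.symm, hab.symm.trans hadt (hdp.1.symm.append t t), hadt,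
    head?_ne [] hadt.1⟩

lemma hasAllSwaps_of_triple (hsp : SwapPrimitive G) (hab : HasSwap G a b) (hac : HasSwap G a c)
    (hbc : HasSwap G b c) (hne : b.head? ≠ c.head?) : HasAllSwaps G a b := by
  intro u
  by_contra hu
  obtain ⟨_, d, ⟨hd, -⟩, ⟨v, rfl, hv⟩, hexit⟩ := hsp.exists_crossing
    (P := fun e => ∃ v, e = a ++ v ∧ ¬ HasSwap G (a ++ v) (b ++ v))
    (hab.1.append u []).left_ne_nil hab.1.right_ne_nil ⟨u, rfl, hu⟩
    (by rintro ⟨v, rfl, -⟩; exact (incomp_iff.1 hab.1).1 (List.prefix_append a v))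
  have hda : Incomp d a := by
    refine incomp_iff.2 ⟨fun h => (incomp_iff.1 hd.1).2 (h.trans (List.prefix_append _ _)), ?_⟩
    rintro ⟨v', rfl⟩
    refine hexit ⟨v', rfl, fun hv' => hv ?_⟩
    exact (hd.trans hv' (hab.1.append _ _)).trans (hd.move_both hab).symm (hab.1.append _ _)
  have hd0 := hd.1.right_ne_nil
  by_cases h : d.head? = b.head?
  · have hdc := incomp_of_head?_ne hd0 hac.1.right_ne_nil (h ▸ hne)
    exact hv ((hac.append_of_exit hd hda hdc).move hbc.symm
      (hac.1.mono (List.prefix_append a v) List.prefix_rfl)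
      (hab.1.mono (List.prefix_append a v) List.prefix_rfl))
  · exact hv (hab.append_of_exit hd hda (incomp_of_head?_ne hd0 hab.1.right_ne_nil h))

lemma exists_hasAllSwaps (hsp : SwapPrimitive G) : ∃ a b, HasAllSwaps G a b := by
  obtain ⟨a, b, c, hab, hac, hbc, hne⟩ := hsp.exists_swap_triple
  exact ⟨a, b, hsp.hasAllSwaps_of_triple hab hac hbc hne⟩

end SwapPrimitive

/-! ### Local swaps -/

/-- The germ at `w` of the substitution `a ↔ b` belongs to `G`: deep enough along `w`, all
transpositions `(a w₀⋯wₙ₋₁ u  b w₀⋯wₙ₋₁ u)` lie in `G`. -/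
def SwapGerm (G : Subgroup (Equiv.Perm Cantor)) (a b : Addr) (w : Cantor) : Prop :=
  ∀ᶠ n in Filter.atTop, HasAllSwaps G (a ++ w.take n) (b ++ w.take n)

/-- Arbitrarily small neighbourhoods of `x` and `y` are swapped by transpositions in `G`, all
given by one pair of addresses. -/
def LocallySwapped (G : Subgroup (Equiv.Perm Cantor)) (x y : Cantor) : Prop :=
  ∃ a b w, HasAllSwaps G a b ∧ x = wcat a w ∧ y = wcat b w

section LocalSwap

variable {w x y z : Cantor}

lemma HasAllSwaps.swapGerm (h : HasAllSwaps G a b) (w : Cantor) : SwapGerm G a b w :=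
  Filter.Eventually.of_forall fun n => h.append (w.take n)

namespace SwapGerm

lemma symm (h : SwapGerm G a b w) : SwapGerm G b a w :=
  h.mono fun _ => HasAllSwaps.symm

lemma trans (hab : SwapGerm G a b w) (hbc : SwapGerm G b c w) (hne : wcat a w ≠ wcat c w) :
    SwapGerm G a c w := by
  filter_upwards [hab, hbc, eventually_incomp_append_take hne] with n hab hbc hac
  exact hab.trans hbc hac

lemma locallySwapped (h : SwapGerm G a b w) : LocallySwapped G (wcat a w) (wcat b w) := by
  obtain ⟨n, hn⟩ := h.exists
  exact ⟨_, _, w.drop n, hn, by simp, by simp⟩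

end SwapGerm

lemma swapGerm_append_iff {z : Addr} :
    SwapGerm G (a ++ z) (b ++ z) w ↔ SwapGerm G a b (wcat z w) := by
  rw [SwapGerm, SwapGerm]
  conv_rhs => rw [← Filter.map_add_atTop_eq_nat z.length, Filter.eventually_map]
  simp only [add_comm _ z.length, take_wcat, List.append_assoc]

namespace LocallySwapped

lemma symm (h : LocallySwapped G x y) : LocallySwapped G y x := by
  obtain ⟨a, b, w, hab, hx, hy⟩ := h
  exact ⟨b, a, w, hab.symm, hy, hx⟩

lemma ne (h : LocallySwapped G x y) : x ≠ y := by
  obtain ⟨a, b, w, hab, rfl, rfl⟩ := h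
  exact hab.incomp.wcat_ne w w

lemma exists_eq_wcat (h : LocallySwapped G x (wcat c w)) (N : ℕ) :
    ∃ d z v, x = wcat d v ∧ w = wcat z v ∧ N ≤ d.length ∧ HasAllSwaps G d (c ++ z) := by
  obtain ⟨a, b, v, hab, rfl, hv⟩ := h
  let n := N + c.length
  have hmem : wcat c w ∈ cone (b ++ v.take n) := ⟨v.drop n, by simp [hv]⟩
  obtain ⟨z, hz⟩ := prefix_of_mem_cone (wcat_mem_cone c w) hmem (by simp [n]; omega)
  refine ⟨a ++ v.take n, z, v.drop n, by simp, wcat_injective c ?_, by simp [n]; omega,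
    hz ▸ hab.append _⟩
  rw [hv, ← wcat_append, hz, wcat_append, wcat_take_drop]

lemma trans (hxy : LocallySwapped G x y) (hyz : LocallySwapped G y z) (hne : x ≠ z) :
    LocallySwapped G x z := by
  obtain ⟨b, c, w, hbc, rfl, rfl⟩ := hyz
  obtain ⟨d, u, v, rfl, rfl, -, hdb⟩ := hxy.exists_eq_wcat 0
  rw [← wcat_append] at hne ⊢
  exact ((hdb.swapGerm v).trans ((hbc.append u).swapGerm v) hne).locallySwapped

lemma map (h : LocallySwapped G x y) {k : Equiv.Perm Cantor} (hk : k ∈ G)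
    (hkc : IsTranspositionOf k c d) : LocallySwapped G (k x) (k y) := by
  obtain ⟨a, b, w, hab, rfl, rfl⟩ := h
  let n := max c.length d.length
  have exists_actsOn (e : Addr) : ∃ e', actsOn k (e ++ w.take n) e' :=
    hkc.exists_actsOn (by simp [n]; omega) (by simp [n]; omega)
  obtain ⟨a', ha⟩ := exists_actsOn a
  obtain ⟨b', hb⟩ := exists_actsOn b
  refine ⟨a', b', w.drop n, (hab.append (w.take n)).conj hk ha hb, ?_, ?_⟩
  · rw [← ha, wcat_append, wcat_take_drop]
  · rw [← hb, wcat_append, wcat_take_drop]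

end LocallySwapped

/-- The equivalence relation generated by the local swaps of `G`. -/
def swapSetoid (G : Subgroup (Equiv.Perm Cantor)) : Setoid Cantor where
  r x y := x = y ∨ LocallySwapped G x y
  iseqv := by
    refine ⟨fun _ => .inl rfl, fun h => h.imp Eq.symm LocallySwapped.symm, ?_⟩
    rintro x y z (rfl | hxy) (rfl | hyz)
    · exact .inl rfl
    · exact .inr hyz
    · exact .inr hxy
    · exact or_iff_not_imp_left.2 (hxy.trans hyz)

lemma LocallySwapped.swapSetoid (h : LocallySwapped G x y) : swapSetoid G x y := .inr h

/-- Conjugation by `(c d)` affects only one end of the local swap joining `x` and `cw`. -/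
lemma HasSwap.swapGerm (hcd : HasSwap G c d) (hc : x ∉ cone c) (hd : x ∉ cone d)
    (h : swapSetoid G x (wcat c w)) : SwapGerm G c d w := by
  rcases h with rfl | h
  · exact absurd (wcat_mem_cone c w) hc
  obtain ⟨a, z, v, rfl, rfl, hl, hac⟩ := h.exists_eq_wcat (max c.length d.length)
  have incomp_a {e : Addr} (he : wcat a v ∉ cone e) (hl : e.length ≤ a.length) : Incomp a e :=
    incomp_of_mem_of_notMem (wcat_mem_cone a v) he hl
  obtain ⟨-, k, hk, hkcd⟩ := id hcd
  have had : HasAllSwaps G a (d ++ z) :=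
    hac.conj hk (hkcd.actsOn_self (incomp_a hc (by omega)) (incomp_a hd (by omega)))
      (hkcd.actsOn_left.append z)
  exact swapGerm_append_iff.1 ((hac.symm.trans had (hcd.1.append z z)).swapGerm v)

lemma HasSwap.forall_notMem_or_forall_mem (hcd : HasSwap G c d)
    (hc : ∀ y, swapSetoid G x y → y ∉ cone c) :
    (∀ y, swapSetoid G x y → y ∉ cone d) ∨ ∀ y, swapSetoid G x y → y ∈ cone d := by
  by_contra! h
  obtain ⟨⟨_, hxy, w, rfl⟩, z, hxz, hzd⟩ := h
  have hgerm : SwapGerm G d c w :=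
    hcd.symm.swapGerm hzd (hc z hxz) ((swapSetoid G).trans ((swapSetoid G).symm hxz) hxy)
  exact hc (wcat c w) ((swapSetoid G).trans hxy hgerm.locallySwapped.swapSetoid) (wcat_mem_cone c w)

lemma hasSwap_of_forall_swapGerm (hab : Incomp a b) (h : ∀ w, SwapGerm G a b w) :
    HasSwap G a b := by
  have hnil := bar_induction (P := fun z => HasSwap G (a ++ z) (b ++ z))
    (fun z hz => HasSwap.of_children (hab.append z z) (by simpa using hz))
    fun w => (h w).exists.imp fun _ hn => hn.hasSwap
  simpa using hnil

lemma hasAllSwaps_of_forall_swapGerm (hab : Incomp a b) (h : ∀ w, SwapGerm G a b w) :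
    HasAllSwaps G a b :=
  fun u => hasSwap_of_forall_swapGerm (hab.append u u) fun w => swapGerm_append_iff.2 (h (wcat u w))

namespace SwapPrimitive

lemma exists_locallySwapped (hsp : SwapPrimitive G) (x : Cantor) : ∃ y, LocallySwapped G x y := by
  obtain ⟨a, b, hab⟩ := hsp.exists_hasAllSwaps
  by_contra hx
  obtain ⟨c, d, ⟨⟨-, k, hk, hkcd⟩, -⟩, hc, hd⟩ := hsp.exists_crossing (b := x.take 1)
    (P := fun e => ∀ w, ∃ y, LocallySwapped G (wcat e w) y) hab.incomp.left_ne_nil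
    (by simp [Cantor.take_succ]) (fun w => ⟨_, (hab.swapGerm w).locallySwapped⟩)
    (fun h => hx (by simpa using h (x.drop 1)))
  refine hd fun w => ?_
  obtain ⟨y, hy⟩ := hc w
  exact ⟨k y, hkcd.actsOn_left w ▸ hy.map hk hkcd⟩

lemma exists_mem_cone_swapSetoid (hsp : SwapPrimitive G) (x : Cantor) (e : Addr) :
    ∃ y ∈ cone e, swapSetoid G x y := by
  rcases eq_or_ne e [] with rfl | he
  · exact ⟨x, ⟨x, wcat_nil x⟩, (swapSetoid G).refl x⟩
  by_contra! h
  obtain ⟨x', hx'⟩ := hsp.exists_locallySwapped x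
  obtain ⟨n, hn⟩ := exists_incomp_take hx'.ne
  obtain ⟨c, d, ⟨hcd, -⟩, hc | hc, hd⟩ := hsp.exists_crossing (b := x.take n)
    (P := fun e => (∀ y, swapSetoid G x y → y ∉ cone e) ∨ ∀ y, swapSetoid G x y → y ∈ cone e)
    he hn.left_ne_nil (.inl fun y hy hye => h y hye hy) (by
      rintro (h | h)
      · exact h x ((swapSetoid G).refl x) (mem_cone_take x n)
      · exact Set.disjoint_left.1 hn (h x' hx'.swapSetoid) (mem_cone_take x' n))
  · exact hd (hcd.forall_notMem_or_forall_mem hc)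
  · exact hd (.inl fun y hy => Set.disjoint_left.1 hcd.1 (hc y hy))

lemma hasAllSwaps_of_hasSmallSwap (hsp : SwapPrimitive G) (h : HasSmallSwap G a b) :
    HasAllSwaps G a b := by
  obtain ⟨hab, hsmall⟩ := h
  obtain ⟨e, hea, heb⟩ := hsmall.exists_incomp
  refine hasAllSwaps_of_forall_swapGerm hab.1 fun w => ?_
  obtain ⟨y, hye, hy⟩ := hsp.exists_mem_cone_swapSetoid (wcat a w) e
  exact hab.swapGerm (Set.disjoint_left.1 hea hye) (Set.disjoint_left.1 heb hye)
    ((swapSetoid G).symm hy)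

/-- `F` consists of the points `cw`, for `c` on the chain: at `dv = cw` the two ends of the composed
swap would coincide. -/
lemma exists_finite_swapGerm_of_chain (hsp : SwapPrimitive G)
    (hab : Relation.ReflTransGen (HasSmallSwap G) a b) (w : Cantor) :
    ∃ F : Set Cantor, F.Finite ∧ ∀ d z v, w = wcat z v → wcat d v ∉ F →
      SwapGerm G d (a ++ z) v → SwapGerm G d (b ++ z) v := by
  induction hab with
  | refl => exact ⟨∅, Set.finite_empty, fun _ _ _ _ _ h => h⟩
  | @tail b c _ hbc ih =>
    obtain ⟨F, hF, ih⟩ := ih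
    refine ⟨insert (wcat c w) F, hF.insert _, ?_⟩
    rintro d z v rfl hdF hda
    rw [Set.mem_insert_iff, not_or, ← wcat_append] at hdF
    exact (ih d z v rfl hdF.2 hda).trans
      (((hsp.hasAllSwaps_of_hasSmallSwap hbc).append z).swapGerm v) hdF.1

lemma hasSwap (hsp : SwapPrimitive G) (hab : Incomp a b) : HasSwap G a b := by
  refine hasSwap_of_forall_swapGerm hab fun w => ?_
  obtain ⟨F, hF, hchain⟩ := hsp.exists_finite_swapGerm_of_chain
    (hsp a b hab.left_ne_nil hab.right_ne_nil).reflTransGen w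
  obtain ⟨e, he⟩ := exists_cone_disjoint (hF.insert (wcat a w))
  obtain ⟨y, hye, hy⟩ := hsp.exists_mem_cone_swapSetoid (wcat a w) e
  have hyF := Set.disjoint_right.1 he hye
  rw [Set.mem_insert_iff, not_or] at hyF
  obtain ⟨d, z, v, rfl, rfl, -, hda⟩ :=
    (hy.resolve_left (Ne.symm hyF.1)).symm.exists_eq_wcat 0
  have hdb : SwapGerm G d (b ++ z) v := hchain d z v rfl hyF.2 (hda.swapGerm v)
  exact swapGerm_append_iff.1
    ((hda.swapGerm v).symm.trans hdb ((hab.append z z).wcat_ne v v))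

end SwapPrimitive

end LocalSwap

/-! ### Transpositions generate Thompson's group -/

/-- The cones of the addresses `A i` partition Cantor space. -/
def IsConePartition {ι : Type*} (A : ι → Addr) : Prop :=
  Pairwise (Function.onFun Incomp A) ∧ ⋃ i, cone (A i) = Set.univ

lemma ne_of_siblings {ι : Type*} {A : ι → Addr} {i j : ι} (hi : A i = a ++ [false])
    (hj : A j = a ++ [true]) : i ≠ j := by
  rintro rfl
  simp [hi] at hj

namespace IsConePartition

variable {ι κ : Type*} {A : ι → Addr}

lemma exists_mem_cone (hA : IsConePartition A) (x : Cantor) : ∃ i, x ∈ cone (A i) :=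
  Set.mem_iUnion.1 (hA.2 ▸ Set.mem_univ x)

lemma comp_equiv (hA : IsConePartition A) (e : κ ≃ ι) : IsConePartition (A ∘ e) :=
  ⟨fun _ _ hij => hA.1 (e.injective.ne hij), by rw [← hA.2, ← e.surjective.iUnion_comp]; rfl⟩

lemma eq_nil [Subsingleton ι] (hA : IsConePartition A) (i : ι) : A i = [] := by
  by_contra hi
  obtain ⟨t, u, hu⟩ := List.exists_cons_of_ne_nil hi
  obtain ⟨j, hj⟩ := hA.exists_mem_cone (wcat [!t] default)
  rw [Subsingleton.elim j i, hu] at hj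
  exact Set.disjoint_left.1 (incomp_of_head?_ne (a := [!t]) (b := t :: u) (by simp) (by simp)
    (by simp)) (wcat_mem_cone _ _) hj

/-- The sibling of a longest address of the partition also belongs to it. -/
lemma exists_siblings [Finite ι] [Nontrivial ι] (hA : IsConePartition A) :
    ∃ a i j, A i = a ++ [false] ∧ A j = a ++ [true] := by
  obtain ⟨i, hi⟩ := Finite.exists_max fun i => (A i).length
  obtain ⟨j, hji⟩ := exists_ne i
  obtain ⟨a, t, ha⟩ := (List.eq_nil_or_concat' (A i)).resolve_left (hA.1 hji.symm).left_ne_nil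
  suffices h : ∃ j, A j = a ++ [!t] by
    obtain ⟨j, hj⟩ := h
    cases t
    · exact ⟨a, i, j, ha, hj⟩
    · exact ⟨a, j, i, hj, ha⟩
  obtain ⟨j, hj⟩ := hA.exists_mem_cone (wcat (a ++ [!t]) default)
  have hprefix : A j <+: a ++ [!t] :=
    prefix_of_mem_cone hj (wcat_mem_cone _ _) (by simpa [ha] using hi j)
  refine ⟨j, (List.prefix_concat_iff.1 hprefix).resolve_right fun hja => ?_⟩
  have hji : j ≠ i := by
    rintro rfl
    simpa [ha] using hja.length_le
  exact (incomp_iff.1 (hA.1 hji)).1 (ha ▸ hja.trans (List.prefix_append a [t]))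

lemma merge [DecidableEq ι] (hA : IsConePartition A) {i₀ i₁ : ι} (h₀ : A i₀ = a ++ [false])
    (h₁ : A i₁ = a ++ [true]) :
    IsConePartition fun i : {i // i ≠ i₁} => Function.update A i₀ a i := by
  have hi : i₀ ≠ i₁ := ne_of_siblings h₀ h₁
  have incomp_merged {i : ι} (hi₀ : i ≠ i₀) (hi₁ : i ≠ i₁) : Incomp a (A i) := by
    refine Set.disjoint_left.2 fun x hxa hxi => ?_
    obtain ⟨t, ht⟩ := exists_mem_cone_child hxa
    cases t
    · exact Set.disjoint_left.1 (hA.1 hi₀) hxi (h₀ ▸ ht)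
    · exact Set.disjoint_left.1 (hA.1 hi₁) hxi (h₁ ▸ ht)
  constructor
  · rintro ⟨i, hi₁⟩ ⟨j, hj₁⟩ hij
    rw [Ne, Subtype.mk.injEq] at hij
    by_cases hi₀ : i = i₀ <;> by_cases hj₀ : j = i₀
    · exact absurd (hi₀.trans hj₀.symm) hij
    · simpa [Function.onFun, hi₀, hj₀] using incomp_merged hj₀ hj₁
    · simpa [Function.onFun, hi₀, hj₀] using (incomp_merged hi₀ hi₁).symm
    · simpa [Function.onFun, hi₀, hj₀] using hA.1 hij
  · refine Set.eq_univ_of_forall fun x => Set.mem_iUnion.2 ?_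
    obtain ⟨i, hxi⟩ := hA.exists_mem_cone x
    by_cases hmerged : i = i₀ ∨ i = i₁
    · refine ⟨⟨i₀, hi⟩, ?_⟩
      have hai : a <+: A i := by rcases hmerged with h | h <;> simp [h, h₀, h₁]
      simpa using cone_subset_of_prefix hai hxi
    · obtain ⟨hi₀, hi₁⟩ := not_or.1 hmerged
      exact ⟨⟨i, hi₁⟩, by simpa [hi₀] using hxi⟩

lemma exists_perm_actsOn [Finite ι] (hG : ∀ a b, Incomp a b → HasSwap G a b)
    (hA : IsConePartition A) (σ : Equiv.Perm ι) : ∃ k ∈ G, ∀ i, actsOn k (A i) (A (σ i)) := by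
  classical
  induction σ using Equiv.Perm.swap_induction_on with
  | one => exact ⟨1, G.one_mem, fun _ _ => rfl⟩
  | swap_mul σ i j hij ih =>
    obtain ⟨k, hk, hkσ⟩ := ih
    obtain ⟨-, l, hl, hlij⟩ := hG _ _ (hA.1 hij)
    have hl_swap (m : ι) : actsOn l (A m) (A (Equiv.swap i j m)) := by
      rcases eq_or_ne m i with rfl | hmi
      · simpa using hlij.actsOn_left
      rcases eq_or_ne m j with rfl | hmj
      · simpa using hlij.symm.actsOn_left
      rw [Equiv.swap_apply_of_ne_of_ne hmi hmj]
      exact hlij.actsOn_self (hA.1 hmi) (hA.1 hmj)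
    exact ⟨l * k, G.mul_mem hl hk, fun m => (hl_swap (σ m)).mul (hkσ m)⟩

lemma mem_of_actsOn [Finite ι] (hG : ∀ a b, Incomp a b → HasSwap G a b) {B : ι → Addr}
    (hA : IsConePartition A) (hB : IsConePartition B) {g : Equiv.Perm Cantor}
    (hg : ∀ i, actsOn g (A i) (B i)) : g ∈ G := by
  classical
  induction ι using Finite.induction_subsingleton_or_nontrivial generalizing g with
  | hbase ι =>
    obtain ⟨i, -⟩ := hA.exists_mem_cone default
    have hg_nil : actsOn g [] [] := by simpa [hA.eq_nil, hB.eq_nil] using hg i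
    have hg_one : g = 1 := by
      ext1 x
      simpa using hg_nil x
    exact hg_one ▸ G.one_mem
  | hstep ι ih =>
    obtain ⟨a, i₀, i₁, ha₀, ha₁⟩ := hA.exists_siblings
    obtain ⟨b, j₀, j₁, hb₀, hb₁⟩ := hB.exists_siblings
    obtain ⟨σ, rfl, rfl⟩ := MulAction.is_two_pretransitive_iff.1
      (Equiv.Perm.isMultiplyPretransitive ι 2) (ne_of_siblings ha₀ ha₁) (ne_of_siblings hb₀ hb₁)
    obtain ⟨k, hk, hkB⟩ := hB.exists_perm_actsOn hG σ
    have hkg (i : ι) : actsOn (k * g) (A i) (B (σ i)) := (hkB i).mul (hg i)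
    have hcard : Nat.card {i // i ≠ i₁} < Nat.card ι := Finite.card_subtype_lt (x := i₁) (by simp)
    refine (G.mul_mem_cancel_left hk).1
      (ih _ hcard (hA.merge ha₀ ha₁) ((hB.comp_equiv σ).merge hb₀ hb₁) ?_)
    rintro ⟨i, hi₁⟩
    rcases eq_or_ne i i₀ with rfl | hi₀
    · simp only [Function.update_self]
      refine actsOn_of_children fun t => ?_
      cases t
      · exact ha₀ ▸ hb₀ ▸ hkg i
      · exact ha₁ ▸ hb₁ ▸ hkg i₁
    · simpa [hi₀] using hkg i

end IsConePartition

end Swaps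

/-- A set of permutations of Cantor space that is closed under the group operations, bundled as a
subgroup. -/
def IsSubgroupSet.toSubgroup {M : Set (Equiv.Perm Cantor)} (hM : IsSubgroupSet M) :
    Subgroup (Equiv.Perm Cantor) where
  carrier := M
  one_mem' := hM.1
  mul_mem' := fun hg hh => hM.2.1 _ hg _ hh
  inv_mem' := fun hg => hM.2.2 _ hg

theorem eq_V_of_swapPrimitive_general (G : Subgroup (Equiv.Perm Cantor))
    (hsp : SwapPrimitive (G : Set (Equiv.Perm Cantor))) : VSet ⊆ G := by
  rintro g ⟨n, A, B, hA, hA_univ, hB, hB_univ, hg⟩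
  exact IsConePartition.mem_of_actsOn (fun a b => hsp.hasSwap) (A := A) (B := B)
    ⟨fun i j => hA i j, hA_univ⟩ ⟨fun i j => hB i j, hB_univ⟩ hg

/-- **Statement 19.**  A swap-primitive subgroup of Thompson's group `V` is all of
`V`. -/
theorem eq_V_of_swapPrimitive (G : Set (Equiv.Perm Cantor))
    (hG : IsSubgroupSet G) (hGV : G ⊆ VSet) (hsp : SwapPrimitive G) :
    G = VSet :=
  hGV.antisymm (eq_V_of_swapPrimitive_general hG.toSubgroup hsp)
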